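/- arXiv:1412.7363 — 3 statements merged into one kernel-verified Lean document; each statement's English description precedes it below -/
import Mathlib

section
/- Let b, c be coprime positive integers, let p ≥ 1 be an integer, and let χ₁, χ₂ be non-principal primitive Dirichlet characters of the same modulus k satisfying (−1)^{p+1}·χ₁(−1)·χ₂(−1) = 1. Then Σ_{n=1}^{ck−1} χ₁(n)·B̄_{p+1,χ₂}(bn/c) = (k/c)^p · Σ_{h=1}^{k−1} Σ_{j=1}^{k−1} χ₁(h)·χ̄₂(j)·B̄_{p+1}( (c·j + b·h)/k ). -/
/-!
The Bernoulli functions satisfy `c ^ (m - 1) * ∑ r < c, B̄ₘ (x + b * r / c) = B̄ₘ (c * x)`: modulo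
`1`, the points `x + b * r / c` are exactly the `z` with `c * z ≡ c * x`, so that by periodicity it
suffices to take `c * x ∈ [0, 1)` and `b = 1`, which is the multiplication theorem for Bernoulli
polynomials. Splitting `n < c * k` as `n = r * k + h` keeps the character value `χ₁ n = χ₁ h`
constant in `r`, and summing `B̄_{m,χ₂} (b * n / c)` over `r` is an instance of this relation with
`x = (j + b * h / c) / k` for each term `j` of `B̄_{m,χ₂}`.
-/

open Finset

/-- The `n`-th Bernoulli polynomial evaluated at a real number. -/
noncomputable def BPoly (n : ℕ) (x : ℝ) : ℝ :=
  Polynomial.eval x ((Polynomial.bernoulli n).map (algebraMap ℚ ℝ))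

open scoped Classical in
/-- The `n`-th Bernoulli function `B̄ₙ`. -/
noncomputable def BFun (n : ℕ) (x : ℝ) : ℝ :=
  if n = 1 then (if ∃ m : ℤ, x = (m : ℝ) then 0 else x - ⌊x⌋ - 1/2)
  else BPoly n (Int.fract x)

/-- The generalized Bernoulli function `B̄_{m,χ}` attached to a Dirichlet character. -/
noncomputable def BFunChar {k : ℕ} (χ : DirichletCharacter ℂ k) (m : ℕ) (x : ℝ) : ℂ :=
  (k : ℂ) ^ ((m : ℤ) - 1) *
    ∑ n ∈ Finset.Icc 1 (k - 1), (starRingEnd ℂ) (χ (n : ZMod k)) * ((BFun m (((n : ℝ) + x) / k)) : ℂ)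

/-- The generalized Bernoulli number `B_{m,χ} = B̄_{m,χ}(0)`. -/
noncomputable def BNumChar {k : ℕ} (χ : DirichletCharacter ℂ k) (m : ℕ) : ℂ := BFunChar χ m 0

/-- The complex conjugate of a Dirichlet character. -/
noncomputable def conjChar {k : ℕ} (χ : DirichletCharacter ℂ k) : DirichletCharacter ℂ k :=
  χ.ringHomComp (starRingEnd ℂ)

/-- The character Dedekind sum `s_p(b,c : χ₁, χ₂)` for characters of the same modulus. -/
noncomputable def sChar {k : ℕ} (p b c : ℕ) (χ₁ χ₂ : DirichletCharacter ℂ k) : ℂ :=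
  ∑ n ∈ Finset.range (c * k),
    χ₁ (n : ZMod k) * BFunChar χ₂ p (((b : ℝ) * n) / c) * ((BFun 1 ((n : ℝ) / (c * k))) : ℂ)

lemma sum_Icc_one_sub_one {M : Type*} [AddCommMonoid M] {f : ℕ → M} (hf : f 0 = 0) (N : ℕ) :
    ∑ n ∈ Icc 1 (N - 1), f n = ∑ n ∈ range N, f n := by
  have hIcc : Icc 1 (N - 1) = (range N).erase 0 := by
    ext n
    simp only [mem_Icc, mem_erase, mem_range]
    omega
  rw [hIcc, sum_erase _ hf]

lemma sum_range_mul_eq_sum_sum {M : Type*} [AddCommMonoid M] (f : ℕ → M) (c k : ℕ) :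
    ∑ n ∈ range (c * k), f n = ∑ h ∈ range k, ∑ r ∈ range c, f (r * k + h) := by
  rw [sum_comm]
  induction c with
  | zero => simp
  | succ c ih => rw [Nat.succ_mul, sum_range_add, ih, sum_range_succ]

lemma sum_range_add_mul_of_periodic {M : Type*} [AddCommMonoid M] {g : ℤ → M} {b : ℤ} {c : ℕ}
    (hg : Function.Periodic g c) (hbc : IsCoprime b c) (a : ℤ) :
    ∑ r ∈ range c, g (a + b * r) = ∑ r ∈ range c, g r := by
  obtain rfl | hc := eq_or_ne c 0
  · simp
  have hc' : (c : ℤ) ≠ 0 := mod_cast hc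
  let residue (r : ℕ) : ℕ := ((a + b * r) % c).toNat
  have cast_residue (r : ℕ) : (residue r : ℤ) = (a + b * r) % c :=
    Int.toNat_of_nonneg (Int.emod_nonneg _ hc')
  have maps : Set.MapsTo residue (range c) (range c) := fun r _ ↦ by
    have residue_lt := Int.emod_lt_of_pos (a + b * r) (by omega : (0 : ℤ) < c)
    rw [← cast_residue] at residue_lt
    exact mem_coe.mpr (mem_range.mpr (mod_cast residue_lt))
  have inj : Set.InjOn residue (range c) := fun r hr s hs hrs ↦ by
    have hmod : a + b * r ≡ a + b * s [ZMOD c] := by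
      rw [Int.ModEq, ← cast_residue, ← cast_residue, hrs]
    have hdvd : (c : ℤ) ∣ b * (s - r) := by
      simpa [mul_sub] using hmod.dvd
    have hrs' : r ≡ s [MOD c] :=
      Int.natCast_modEq_iff.mp (Int.modEq_iff_dvd.mpr (hbc.symm.dvd_of_dvd_mul_left hdvd))
    exact hrs'.eq_of_lt_of_lt (by simpa using hr) (by simpa using hs)
  refine sum_nbij residue maps inj (surjOn_of_injOn_of_card_le residue maps inj le_rfl)
    fun r _ ↦ ?_
  rw [cast_residue, Int.emod_def, mul_comm (c : ℤ)]
  exact (hg.sub_int_mul_eq _).symm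

/- The correction accounts for `B̄₁ 0 = 0`, whereas the first Bernoulli polynomial takes the value
`-1 / 2` at `0`. -/
lemma BFun_eq_bernoulliFun_fract_add (m : ℕ) (x : ℝ) :
    BFun m x = bernoulliFun m (Int.fract x) + if m = 1 ∧ Int.fract x = 0 then 1 / 2 else 0 := by
  obtain rfl | hm := eq_or_ne m 1
  · have isInt_iff : (∃ z : ℤ, x = z) ↔ Int.fract x = 0 := by
      simp [Int.fract_eq_zero_iff, eq_comm]
    by_cases hx : ∃ z : ℤ, x = z
    · simp [BFun, if_pos hx, isInt_iff.mp hx]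
    · simp [BFun, if_neg hx, isInt_iff.not.mp hx]
  · simp [BFun, BPoly, bernoulliFun, hm]

lemma BFun_periodic (m : ℕ) : Function.Periodic (BFun m) 1 := fun x ↦ by
  simp only [BFun_eq_bernoulliFun_fract_add, Int.fract_add_one]

lemma BFun_eq_sum_of_mem_Ico (m : ℕ) {c : ℕ} (hc : c ≠ 0) {y : ℝ} (hy : y ∈ Set.Ico (0 : ℝ) 1) :
    BFun m y = (c : ℝ) ^ ((m : ℤ) - 1) * ∑ r ∈ range c, BFun m (y / c + r / c) := by
  have hcR : (c : ℝ) ≠ 0 := mod_cast hc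
  have mem_Ico (r : ℕ) (hr : r ∈ range c) : y / c + r / c ∈ Set.Ico (0 : ℝ) 1 := by
    have hrc : (r : ℝ) + 1 ≤ c := mod_cast mem_range.mp hr
    rw [← add_div]
    exact ⟨div_nonneg (add_nonneg hy.1 r.cast_nonneg) c.cast_nonneg,
      (div_lt_one (by positivity)).mpr (by linarith [hy.2])⟩
  have eq_zero_iff (r : ℕ) : y / c + r / c = 0 ↔ r = 0 ∧ y = 0 := by
    rw [← add_div, div_eq_zero_iff, or_iff_left hcR,
      add_eq_zero_iff_of_nonneg hy.1 r.cast_nonneg, Nat.cast_eq_zero, and_comm]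
  have correction : (if m = 1 ∧ y = 0 then 1 / 2 else 0) = (c : ℝ) ^ ((m : ℤ) - 1) *
      ∑ r ∈ range c, if m = 1 ∧ y / c + r / c = 0 then (1 / 2 : ℝ) else 0 := by
    by_cases h : m = 1 ∧ y = 0
    · simp [h, div_eq_zero_iff, hc]
    · have hr (r : ℕ) : ¬(m = 1 ∧ y / c + r / c = 0) := by
        rw [eq_zero_iff]
        tauto
      simp [h, hr]
  have polynomial : bernoulliFun m y = (c : ℝ) ^ ((m : ℤ) - 1) *
      ∑ r ∈ range c, bernoulliFun m (y / c + r / c) := by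
    rw [zpow_natCast_sub_one₀ hcR, ← bernoulliFun_mul m hc, mul_div_cancel₀ _ hcR]
  rw [BFun_eq_bernoulliFun_fract_add, Int.fract_eq_self.mpr hy, polynomial, correction, ← mul_add,
    ← sum_add_distrib]
  congr! 2 with r hr
  rw [BFun_eq_bernoulliFun_fract_add, Int.fract_eq_self.mpr (mem_Ico r hr)]

lemma BFun_mul (m : ℕ) {b c : ℕ} (hc : c ≠ 0) (hbc : b.Coprime c) (x : ℝ) :
    BFun m (c * x) = (c : ℝ) ^ ((m : ℤ) - 1) * ∑ r ∈ range c, BFun m (x + b * r / c) := by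
  have hcR : (c : ℝ) ≠ 0 := mod_cast hc
  set y := Int.fract (c * x)
  have hx : x = y / c + ⌊c * x⌋ / c := by
    rw [← add_div, Int.fract_add_floor, mul_div_cancel_left₀ _ hcR]
  have hperiodic : Function.Periodic (fun t : ℤ ↦ BFun m (y / c + t / c)) c := fun t ↦ by
    refine .trans (congr_arg (BFun m) ?_) (BFun_periodic m (y / c + t / c))
    push_cast
    rw [add_div, div_self hcR, add_assoc]
  calc BFun m (c * x)
    _ = BFun m y := by
      simpa using ((BFun_periodic m).sub_int_mul_eq ⌊c * x⌋ (x := c * x)).symm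
    _ = c ^ ((m : ℤ) - 1) * ∑ r ∈ range c, BFun m (y / c + r / c) :=
      BFun_eq_sum_of_mem_Ico m hc ⟨Int.fract_nonneg _, Int.fract_lt_one _⟩
    _ = c ^ ((m : ℤ) - 1) * ∑ r ∈ range c, BFun m (y / c + (⌊c * x⌋ + b * r) / c) := by
      have reindex := sum_range_add_mul_of_periodic hperiodic hbc.isCoprime ⌊c * x⌋
      push_cast at reindex
      rw [reindex]
    _ = c ^ ((m : ℤ) - 1) * ∑ r ∈ range c, BFun m (x + b * r / c) := by
      congr! 3 with r
      nth_rw 2 [hx]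
      ring

lemma sum_BFunChar_add_mul_div (m : ℕ) {b c k : ℕ} [NeZero k] (hc : c ≠ 0) (hbc : b.Coprime c)
    (χ : DirichletCharacter ℂ k) (x : ℝ) :
    ∑ r ∈ range c, BFunChar χ m (x + b * (r * k) / c) = ((k : ℂ) / c) ^ ((m : ℤ) - 1) *
      ∑ j ∈ Icc 1 (k - 1), starRingEnd ℂ (χ j) * (BFun m (c * (j + x) / k) : ℂ) := by
  have hcR : (c : ℝ) ≠ 0 := mod_cast hc
  have hkR : (k : ℝ) ≠ 0 := NeZero.ne _
  simp only [BFunChar]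
  rw [← mul_sum, sum_comm, div_zpow, div_mul_eq_mul_div, mul_div_assoc, sum_div]
  congr! 2 with j
  have arg_eq (r : ℕ) : (j + (x + b * (r * k) / c)) / k = (j + x) / k + b * r / c := by
    field_simp
    ring
  simp only [arg_eq, mul_div_assoc (c : ℝ), BFun_mul m hc hbc, ← mul_sum]
  push_cast
  field_simp

theorem sum_char_BFunChar_eq_double_sum_general (b c : ℕ) (hc : 0 < c) (hbc : Nat.Coprime b c)
    (p k : ℕ) [NeZero k] (f : ZMod k → ℂ) (hf : f 0 = 0) (χ : DirichletCharacter ℂ k) :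
    ∑ n ∈ Icc 1 (c * k - 1), f n * BFunChar χ (p + 1) ((b * n) / c) =
      ((k : ℂ) / c) ^ p * ∑ h ∈ Icc 1 (k - 1), ∑ j ∈ Icc 1 (k - 1),
        f h * starRingEnd ℂ (χ j) * (BFun (p + 1) ((c * j + b * h) / k) : ℂ) := by
  have hcR : (c : ℝ) ≠ 0 := mod_cast hc.ne'
  rw [sum_Icc_one_sub_one (by simp [hf]), sum_Icc_one_sub_one (by simp [hf]),
    sum_range_mul_eq_sum_sum, mul_sum]
  refine sum_congr rfl fun h _ ↦ ?_
  have residue_eq (r : ℕ) : ((r * k + h : ℕ) : ZMod k) = h := by simp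
  have shifted_arg (r : ℕ) : (b : ℝ) * (r * k + h : ℕ) / c = b * h / c + b * (r * k) / c := by
    push_cast
    ring
  have scaled_arg (j : ℕ) : (c : ℝ) * (j + b * h / c) / k = (c * j + b * h) / k := by
    field_simp
  calc ∑ r ∈ range c, f (r * k + h : ℕ) * BFunChar χ (p + 1) (b * (r * k + h : ℕ) / c)
    _ = f h * ∑ r ∈ range c, BFunChar χ (p + 1) (b * h / c + b * (r * k) / c) := by
      simp only [shifted_arg, residue_eq, mul_sum]
    _ = ((k : ℂ) / c) ^ p * ∑ j ∈ Icc 1 (k - 1),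
          f h * starRingEnd ℂ (χ j) * (BFun (p + 1) ((c * j + b * h) / k) : ℂ) := by
      simp only [sum_BFunChar_add_mul_div (p + 1) hc.ne' hbc χ, scaled_arg, Nat.cast_add_one,
        add_sub_cancel_right, zpow_natCast, mul_left_comm (f h), mul_sum, mul_assoc]

/-- Evaluation of `Σ_{n=1}^{ck−1} χ₁(n) B̄_{p+1,χ₂}(bn/c)` as a double character sum. -/
theorem sum_char_BFunChar_eq_double_sum (b c : ℕ) (hb : 0 < b) (hc : 0 < c)
    (hbc : Nat.Coprime b c) (p : ℕ) (hp : 1 ≤ p)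
    (k : ℕ) [NeZero k] (χ₁ χ₂ : DirichletCharacter ℂ k)
    (h₁ : χ₁ ≠ 1) (h₂ : χ₂ ≠ 1) (hprim₁ : χ₁.IsPrimitive) (hprim₂ : χ₂.IsPrimitive)
    (hpar : (-1 : ℂ) ^ (p + 1) * χ₁ (-1) * χ₂ (-1) = 1) :
    ∑ n ∈ Finset.Icc 1 (c * k - 1), χ₁ (n : ZMod k) * BFunChar χ₂ (p + 1) (((b : ℝ) * n) / c) =
      ((k : ℂ) / c) ^ p * ∑ h ∈ Finset.Icc 1 (k - 1), ∑ j ∈ Finset.Icc 1 (k - 1),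
        χ₁ (h : ZMod k) * (starRingEnd ℂ) (χ₂ (j : ZMod k)) *
          ((BFun (p + 1) (((c : ℝ) * j + (b : ℝ) * h) / k)) : ℂ) := by
  have hk : k ≠ 1 := by
    rintro rfl
    exact h₁ χ₁.level_one
  exact sum_char_BFunChar_eq_double_sum_general b c hc hbc p k χ₁ (χ₁.map_zero' hk) χ₂
end

section
/- Let b, c be positive integers, let p > 1 be an integer, let l be an integer with 0 ≤ l ≤ p−1, and let χ₁, χ₂ be non-principal primitive Dirichlet characters of the same modulus k satisfying (−1)^{p+1}·χ₁(−1)·χ₂(−1) = −1. Then ∫_0^k B̄_{l+1,χ̄₁}(cx)·B̄_{p−l,χ₂}(bx) dx = 0. -/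
open Finset

/-!
Both `B̄ₙ` and `B̄_{m,χ}` are periodic, and reflecting the argument multiplies them by `(-1)ⁿ` and
`(-1)ᵐ χ(-1)` respectively. Since the length `L` of the interval is a period of both factors, the
reflection `x ↦ L - x` multiplies the integrand by the product of the two signs, which the parity
condition makes `-1`; it also preserves the integral, so the integral equals its own negative.
-/

theorem BFun_eq_ite (n : ℕ) (x : ℝ) :
    BFun n x = if n = 1 ∧ Int.fract x = 0 then 0 else bernoulliFun n (Int.fract x) := by
  have hint : (∃ m : ℤ, x = m) ↔ Int.fract x = 0 := by
    simp only [Int.fract_eq_zero_iff, Set.mem_range, eq_comm]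
  rcases eq_or_ne n 1 with rfl | hn
  · simp only [BFun, if_true, hint, true_and, bernoulliFun_one, Int.self_sub_floor]
  · simp only [BFun, hn, if_false, false_and, BPoly, bernoulliFun]

theorem periodic_BFun (n : ℕ) : Function.Periodic (BFun n) 1 := fun x => by
  simp only [BFun_eq_ite, Int.fract_add_one]

theorem neg_one_pow_mul_bernoulliFun_zero {n : ℕ} (hn : n ≠ 1) :
    (-1) ^ n * bernoulliFun n 0 = bernoulliFun n 0 := by
  rw [← bernoulliFun_eval_one_sub, sub_zero, bernoulliFun_endpoints_eq_of_ne_one hn]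

theorem BFun_neg (n : ℕ) (x : ℝ) : BFun n (-x) = (-1) ^ n * BFun n x := by
  simp only [BFun_eq_ite, Int.fract_neg_eq_zero]
  by_cases hx : Int.fract x = 0
  · by_cases hn : n = 1
    · simp only [hn, hx, and_self, if_true, mul_zero]
    · simp only [hn, hx, Int.fract_neg_eq_zero.mpr hx, false_and, if_false,
        neg_one_pow_mul_bernoulliFun_zero hn]
  · simp only [hx, and_false, if_false, Int.fract_neg hx, bernoulliFun_eval_one_sub]

theorem starRingEnd_dirichletCharacter_neg_one {S : Type*} [CommRing S] [NoZeroDivisors S]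
    [StarRing S] {k : ℕ} (χ : DirichletCharacter S k) : starRingEnd S (χ (-1)) = χ (-1) := by
  rcases χ.even_or_odd with (h : χ (-1) = 1) | (h : χ (-1) = -1)
  · rw [h, map_one]
  · rw [h, map_neg, map_one]

theorem conjChar_neg_one {k : ℕ} (χ : DirichletCharacter ℂ k) : conjChar χ (-1) = χ (-1) :=
  starRingEnd_dirichletCharacter_neg_one χ

section BFunChar

variable {k : ℕ} [NeZero k] (χ : DirichletCharacter ℂ k) (m : ℕ)

theorem periodic_BFunChar : Function.Periodic (BFunChar χ m) k := fun x => by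
  have hk : (k : ℝ) ≠ 0 := NeZero.ne _
  simp only [BFunChar, ← add_assoc, add_div _ (k : ℝ), div_self hk, (periodic_BFun m) _]

theorem BFunChar_neg (x : ℝ) : BFunChar χ m (-x) = (-1) ^ m * χ (-1) * BFunChar χ m x := by
  have hk : (k : ℝ) ≠ 0 := NeZero.ne _
  unfold BFunChar
  rw [mul_left_comm, Finset.mul_sum _ _ ((-1) ^ m * χ (-1))]
  congr 1
  refine Finset.sum_nbij' (k - ·) (k - ·) (by grind) (by grind) (by grind) (by grind) fun n hn => ?_
  have hnk : n ≤ k := by grind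
  have hχ : starRingEnd ℂ (χ n) = χ (-1) * starRingEnd ℂ (χ (k - n : ℕ)) := by
    rw [← starRingEnd_dirichletCharacter_neg_one, ← map_mul, ← map_mul, Nat.cast_sub hnk,
      ZMod.natCast_self, zero_sub, neg_one_mul, neg_neg]
  have hB : BFun m ((n + -x) / k) = (-1) ^ m * BFun m (((k - n : ℕ) + x) / k) := by
    rw [← BFun_neg, ← (periodic_BFun m).sub_eq', Nat.cast_sub hnk]
    congr 1
    field_simp
    ring
  rw [hχ, hB]
  push_cast
  ring

theorem BFunChar_intCast_mul_sub (j : ℤ) (x : ℝ) :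
    BFunChar χ m (j * k - x) = (-1) ^ m * χ (-1) * BFunChar χ m x := by
  rw [(periodic_BFunChar χ m).int_mul_sub_eq, BFunChar_neg]

end BFunChar

theorem intervalIntegral_eq_zero_of_comp_add_sub_eq_neg {E : Type*} [NormedAddCommGroup E]
    [NormedSpace ℝ E] {f : ℝ → E} {a b : ℝ} (hf : ∀ x, f (a + b - x) = -f x) :
    ∫ x in a..b, f x = 0 := by
  have h : ∫ x in a..b, f (a + b - x) = ∫ x in a..b, f x := by
    rw [intervalIntegral.integral_comp_sub_left, add_sub_cancel_right, add_sub_cancel_left]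
  simp only [hf, intervalIntegral.integral_neg] at h
  have : IsAddTorsionFree E := .of_isTorsionFree ℝ E
  exact neg_eq_self.mp h

theorem integral_BFunChar_mul_BFunChar_eq_zero_general {k₁ k₂ : ℕ} [NeZero k₁] [NeZero k₂]
    (χ₁ : DirichletCharacter ℂ k₁) (χ₂ : DirichletCharacter ℂ k₂) {m₁ m₂ : ℕ}
    (hpar : (-1) ^ (m₁ + m₂) * χ₁ (-1) * χ₂ (-1) = -1)
    {a₁ a₂ L : ℝ} {j₁ j₂ : ℤ} (h₁ : a₁ * L = j₁ * k₁) (h₂ : a₂ * L = j₂ * k₂) :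
    ∫ x in (0 : ℝ)..L, BFunChar χ₁ m₁ (a₁ * x) * BFunChar χ₂ m₂ (a₂ * x) = 0 := by
  refine intervalIntegral_eq_zero_of_comp_add_sub_eq_neg fun x => ?_
  rw [zero_add, mul_sub, mul_sub, h₁, h₂, BFunChar_intCast_mul_sub, BFunChar_intCast_mul_sub]
  linear_combination (BFunChar χ₁ m₁ (a₁ * x) * BFunChar χ₂ m₂ (a₂ * x)) * hpar

/-- Vanishing of the integral of a product of two generalized Bernoulli functions when
`(−1)^{p+1} χ₁(−1) χ₂(−1) = −1`. -/
theorem integral_BFunChar_mul_BFunChar_eq_zero (b c : ℕ) (hb : 0 < b) (hc : 0 < c)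
    (p : ℕ) (hp : 1 < p) (l : ℕ) (hl : l ≤ p - 1)
    (k : ℕ) [NeZero k] (χ₁ χ₂ : DirichletCharacter ℂ k)
    (h₁ : χ₁ ≠ 1) (h₂ : χ₂ ≠ 1) (hprim₁ : χ₁.IsPrimitive) (hprim₂ : χ₂.IsPrimitive)
    (hpar : (-1 : ℂ) ^ (p + 1) * χ₁ (-1) * χ₂ (-1) = -1) :
    ∫ x in (0 : ℝ)..(k : ℝ),
        BFunChar (conjChar χ₁) (l + 1) ((c : ℝ) * x) * BFunChar χ₂ (p - l) ((b : ℝ) * x) = 0 := by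
  have hsum : l + 1 + (p - l) = p + 1 := by omega
  exact integral_BFunChar_mul_BFunChar_eq_zero_general (j₁ := c) (j₂ := b) (conjChar χ₁) χ₂
    (by rw [hsum, conjChar_neg_one, hpar]) (by simp) (by simp)
end

section
/- Let n ≥ 1 be an integer, t > 0 a real number, y a real number, and s a complex number with Re(s) > 0. Then ∫_0^∞ e^{−su}·B̄_n(tu+y) du = n!·(t^n/s^{n+1})·( Σ_{a=0}^{n} (B_a({y})/a!)·(s/t)^a − (s/t)·e^{{y}·s/t}/(e^{s/t}−1) ), where {y} = y − ⌊y⌋ denotes the fractional part of y. -/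
open Finset

/-! Truncating `∑ Bₐ(x) wᵃ / a! = w e^{xw} / (e^w - 1)` after the term of index `n` leaves a
remainder `R(x)` with `R' = w R - (w^{n+1} / n!) Bₙ(x)`. The jump `w` of the partial sum between
`x = 0` and `x = 1` is cancelled by that of the closed form, so `u ↦ R({tu + y})` is continuous and
bounded. For `w = s / t`, the function `-(n! tⁿ / s^{n+1}) e^{-su} R({tu + y})` is therefore a
primitive of `e^{-su} B̄ₙ(tu + y)` off a countable set, it vanishes at infinity, and the integral is
read off at `u = 0`. -/

open MeasureTheory Filter Topology Set

section Calculus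

theorem exists_norm_comp_fract_le {E : Type*} [SeminormedAddCommGroup E] {f : ℝ → E}
    (hf : ContinuousOn f (Icc 0 1)) : ∃ C, ∀ x, ‖f (Int.fract x)‖ ≤ C := by
  obtain ⟨C, hC⟩ := isCompact_Icc.exists_bound_of_continuousOn hf
  exact ⟨C, fun x ↦ hC _ (unitInterval.fract_mem x)⟩

variable {E : Type*} [NormedAddCommGroup E] [NormedSpace ℝ E]

theorem integral_Ioi_of_hasDerivAt_off_countable_of_tendsto [CompleteSpace E] {f f' : ℝ → E}
    {a : ℝ} {m : E} {S : Set ℝ} (hS : S.Countable) (hcont : ContinuousOn f (Ici a))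
    (hderiv : ∀ x ∈ Ioi a \ S, HasDerivAt f (f' x) x) (f'int : IntegrableOn f' (Ioi a))
    (hf : Tendsto f atTop (𝓝 m)) : ∫ x in Ioi a, f' x = m - f a := by
  refine tendsto_nhds_unique (intervalIntegral_tendsto_integral_Ioi a f'int tendsto_id) ?_
  refine (hf.sub_const (f a)).congr' ?_
  filter_upwards [eventually_ge_atTop a] with b hab
  exact (integral_eq_of_hasDerivAt_off_countable_of_le f f' hab hS
    (hcont.mono Icc_subset_Ici_self) (fun x hx ↦ hderiv x ⟨hx.1.1, hx.2⟩)
    ((intervalIntegrable_iff_integrableOn_Ioc_of_le hab).2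
      (f'int.mono_set Ioc_subset_Ioi_self))).symm

theorem hasDerivAt_comp_fract {f : ℝ → E} {f' : E} {x : ℝ} (hx : x ∉ range ((↑) : ℤ → ℝ))
    (hf : HasDerivAt f f' (Int.fract x)) : HasDerivAt (fun z ↦ f (Int.fract z)) f' x := by
  have hlt : (⌊x⌋ : ℝ) < x := (Int.floor_le x).lt_of_ne fun h ↦ hx ⟨⌊x⌋, h⟩
  refine (HasDerivAt.comp_sub_const x (⌊x⌋ : ℝ) hf).congr_of_eventuallyEq ?_
  filter_upwards [Ioo_mem_nhds hlt (Int.lt_floor_add_one x)] with z hz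
  rw [Int.fract, Int.floor_eq_iff.2 ⟨hz.1.le, hz.2⟩]

end Calculus

section ExponentialDecay

variable {s : ℂ} {g : ℝ → ℂ} {C : ℝ}

theorem integrableOn_Ioi_exp_neg_mul_mul_of_bounded {a : ℝ} (hs : 0 < s.re)
    (hg : AEStronglyMeasurable g (volume.restrict (Ioi a))) (hC : ∀ u, ‖g u‖ ≤ C) :
    IntegrableOn (fun u : ℝ ↦ Complex.exp (-s * u) * g u) (Ioi a) :=
  Integrable.mul_bdd (integrableOn_exp_mul_complex_Ioi (by simpa using hs) a)
    hg (ae_of_all _ hC)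

theorem tendsto_exp_neg_mul_mul_atTop_of_bounded (hs : 0 < s.re) (hC : ∀ u, ‖g u‖ ≤ C) :
    Tendsto (fun u : ℝ ↦ Complex.exp (-s * u) * g u) atTop (𝓝 0) := by
  have hexp : Tendsto (fun u : ℝ ↦ Complex.exp (-s * u)) atTop (𝓝 0) := by
    rw [Complex.tendsto_exp_nhds_zero_iff]
    simpa using tendsto_id.const_mul_atTop hs
  exact hexp.zero_mul_isBoundedUnder_le (isBoundedUnder_of ⟨C, hC⟩)

theorem exp_ne_one_of_re_ne_zero (hs : s.re ≠ 0) : Complex.exp s ≠ 1 := fun h ↦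
  hs (by simpa [Complex.norm_exp] using congrArg norm h)

end ExponentialDecay

section BernoulliFunction

theorem BPoly_eq_bernoulliFun : BPoly = bernoulliFun := rfl

theorem BFun_eq_indicator (n : ℕ) :
    BFun n = {x | n = 1 ∧ x ∈ range ((↑) : ℤ → ℝ)}ᶜ.indicator
      fun x ↦ bernoulliFun n (Int.fract x) := by
  funext x
  by_cases hx : n = 1 ∧ x ∈ range ((↑) : ℤ → ℝ)
  · rw [indicator_of_notMem (not_not.2 hx)]
    obtain ⟨rfl, m, rfl⟩ := hx
    simp [BFun]
  · rw [indicator_of_mem hx, BFun]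
    split_ifs with hn hm
    · exact absurd ⟨hn, hm.imp fun _ ↦ Eq.symm⟩ hx
    · rw [hn, bernoulliFun_one, Int.fract]
    · rw [BPoly_eq_bernoulliFun]

theorem BFun_of_notMem_range_intCast (n : ℕ) {x : ℝ} (hx : x ∉ range ((↑) : ℤ → ℝ)) :
    BFun n x = bernoulliFun n (Int.fract x) := by
  rw [BFun_eq_indicator]
  exact indicator_of_mem (mt And.right hx) _

theorem measurable_BFun (n : ℕ) : Measurable (BFun n) := by
  rw [BFun_eq_indicator]
  have hrange : MeasurableSet (range ((↑) : ℤ → ℝ)) := (countable_range _).measurableSet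
  exact ((continuous_bernoulliFun n).measurable.comp measurable_fract).indicator
    ((MeasurableSet.const (n = 1)).inter hrange).compl

theorem exists_norm_BFun_le (n : ℕ) : ∃ C, ∀ x, ‖BFun n x‖ ≤ C := by
  obtain ⟨C, hC⟩ := exists_norm_comp_fract_le (continuous_bernoulliFun n).continuousOn
  refine ⟨C, fun x ↦ ?_⟩
  rw [BFun_eq_indicator]
  exact (norm_indicator_le_norm_self _ x).trans (hC x)

theorem integrableOn_Ioi_exp_neg_mul_mul_BFun (n : ℕ) {s : ℂ} (hs : 0 < s.re) (t y a : ℝ) :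
    IntegrableOn (fun u : ℝ ↦ Complex.exp (-s * u) * (BFun n (t * u + y) : ℂ)) (Ioi a) := by
  obtain ⟨C, hC⟩ := exists_norm_BFun_le n
  have hmeas : Measurable fun u : ℝ ↦ (BFun n (t * u + y) : ℂ) :=
    Complex.measurable_ofReal.comp ((measurable_BFun n).comp (by fun_prop))
  exact integrableOn_Ioi_exp_neg_mul_mul_of_bounded hs hmeas.aestronglyMeasurable
    fun u ↦ (Complex.norm_real _).trans_le (hC _)

end BernoulliFunction

section Remainder

/-- The remainder of the generating series `∑ Bₐ(x) wᵃ / a! = w e^{xw} / (e^w - 1)` of the Bernoulli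
polynomials after the term of index `n`, with the sign "partial sum minus closed form". The closed
form makes sense, and is used, beyond the disc of convergence `‖w‖ < 2π`. -/
noncomputable def bernoulliRemainder (n : ℕ) (w : ℂ) (x : ℝ) : ℂ :=
  (∑ a ∈ Finset.range (n + 1), (bernoulliFun a x : ℂ) / (a.factorial : ℂ) * w ^ a)
    - w * Complex.exp (x * w) / (Complex.exp w - 1)

theorem hasDerivAt_sum_bernoulliFun (n : ℕ) (w : ℂ) (x : ℝ) :
    HasDerivAt (fun x : ℝ ↦ ∑ a ∈ Finset.range (n + 1),
        (bernoulliFun a x : ℂ) / (a.factorial : ℂ) * w ^ a)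
      (w * ∑ a ∈ Finset.range n, (bernoulliFun a x : ℂ) / (a.factorial : ℂ) * w ^ a) x := by
  have hterm (a : ℕ) := (((hasDerivAt_bernoulliFun a x).ofReal_comp).div_const
    (a.factorial : ℂ)).mul_const (w ^ a)
  refine (HasDerivAt.fun_sum fun a _ ↦ hterm a).congr_deriv ?_
  rw [Finset.sum_range_succ', Finset.mul_sum]
  simp only [Nat.cast_zero, zero_mul, Complex.ofReal_zero, zero_div, add_zero]
  refine Finset.sum_congr rfl fun a _ ↦ ?_
  rw [Nat.factorial_succ, Nat.add_sub_cancel]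
  push_cast
  have ha : (a + 1 : ℂ) ≠ 0 := Nat.cast_add_one_ne_zero a
  field_simp
  ring

theorem hasDerivAt_bernoulliRemainder (n : ℕ) (w : ℂ) (x : ℝ) :
    HasDerivAt (bernoulliRemainder n w)
      (w * bernoulliRemainder n w x - w ^ (n + 1) / (n.factorial : ℂ) * bernoulliFun n x) x := by
  have hexp : HasDerivAt (fun x : ℝ ↦ Complex.exp (x * w)) (Complex.exp (x * w) * w) x :=
    (hasDerivAt_mul_const w).cexp.comp_ofReal
  refine ((hasDerivAt_sum_bernoulliFun n w x).sub
    ((hexp.const_mul w).div_const (Complex.exp w - 1))).congr_deriv ?_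
  rw [bernoulliRemainder, Finset.sum_range_succ]
  ring

theorem bernoulliRemainder_one {n : ℕ} (hn : n ≠ 0) {w : ℂ} (hw : Complex.exp w ≠ 1) :
    bernoulliRemainder n w 1 = bernoulliRemainder n w 0 := by
  have hterm (a : ℕ) : (bernoulliFun a 1 : ℂ) / (a.factorial : ℂ) * w ^ a =
      (bernoulliFun a 0 : ℂ) / (a.factorial : ℂ) * w ^ a + if a = 1 then w else 0 := by
    rw [bernoulliFun_eval_one]
    split_ifs with ha
    · subst ha
      push_cast
      ring
    · simp only [add_zero]
  have hmem : 1 ∈ Finset.range (n + 1) := Finset.mem_range.2 (by lia)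
  have hw' : Complex.exp w - 1 ≠ 0 := sub_ne_zero.2 hw
  simp only [bernoulliRemainder, hterm, Finset.sum_add_distrib, Finset.sum_ite_eq', hmem, if_true,
    Complex.ofReal_one, Complex.ofReal_zero, one_mul, zero_mul, Complex.exp_zero]
  field_simp
  ring

theorem continuous_bernoulliRemainder (n : ℕ) (w : ℂ) : Continuous (bernoulliRemainder n w) :=
  continuous_iff_continuousAt.2 fun x ↦ (hasDerivAt_bernoulliRemainder n w x).continuousAt

theorem continuous_bernoulliRemainder_fract {n : ℕ} (hn : n ≠ 0) {w : ℂ}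
    (hw : Complex.exp w ≠ 1) : Continuous fun x ↦ bernoulliRemainder n w (Int.fract x) :=
  (continuous_bernoulliRemainder n w).continuousOn.comp_fract'' (bernoulliRemainder_one hn hw).symm

end Remainder

theorem hasDerivAt_exp_neg_mul_mul_bernoulliRemainder (n : ℕ) {t y u : ℝ} (ht : t ≠ 0) {s : ℂ}
    (hs : s ≠ 0) (hu : t * u + y ∉ range ((↑) : ℤ → ℝ)) :
    HasDerivAt (fun u : ℝ ↦ -((n.factorial : ℂ) * ((t : ℂ) ^ n / s ^ (n + 1))) *
        (Complex.exp (-s * u) * bernoulliRemainder n (s / t) (Int.fract (t * u + y))))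
      (Complex.exp (-s * u) * BFun n (t * u + y)) u := by
  have hexp : HasDerivAt (fun u : ℝ ↦ Complex.exp (-s * u)) (Complex.exp (-s * u) * -s) u :=
    (hasDerivAt_const_mul (-s)).cexp.comp_ofReal
  have hlin : HasDerivAt (fun u : ℝ ↦ t * u + y) t u :=
    (hasDerivAt_const_mul t).add_const y
  have hrem := (hasDerivAt_comp_fract hu (hasDerivAt_bernoulliRemainder n (s / t) _)).scomp u hlin
  refine ((hexp.mul hrem).const_mul _).congr_deriv ?_
  have ht' : (t : ℂ) ≠ 0 := Complex.ofReal_ne_zero.2 ht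
  have hfact : (n.factorial : ℂ) ≠ 0 := Nat.cast_ne_zero.2 n.factorial_ne_zero
  rw [BFun_of_notMem_range_intCast n hu, Complex.real_smul, div_pow]
  simp only [Function.comp_apply]
  field_simp
  ring

theorem countable_setOf_affine_mem_range_intCast {t : ℝ} (ht : t ≠ 0) (y : ℝ) :
    {u : ℝ | t * u + y ∈ range ((↑) : ℤ → ℝ)}.Countable :=
  (countable_range _).preimage_of_injOn
    ((add_left_injective y).comp (mul_right_injective₀ ht)).injOn

theorem laplace_transform_BFun_general {n : ℕ} (hn : n ≠ 0) {t : ℝ} (ht : t ≠ 0) (y : ℝ)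
    {s : ℂ} (hs : 0 < s.re) :
    ∫ u in Ioi (0 : ℝ), Complex.exp (-s * u) * (BFun n (t * u + y) : ℂ) =
      (n.factorial : ℂ) * ((t : ℂ) ^ n / s ^ (n + 1)) *
        bernoulliRemainder n (s / t) (Int.fract y) := by
  have hs₀ : s ≠ 0 := by
    rintro rfl
    exact lt_irrefl _ hs
  have hw : Complex.exp (s / t) ≠ 1 := exp_ne_one_of_re_ne_zero <| by
    rw [Complex.div_ofReal_re]
    exact div_ne_zero hs.ne' ht
  have hcont : Continuous fun u : ℝ ↦ bernoulliRemainder n (s / t) (Int.fract (t * u + y)) :=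
    (continuous_bernoulliRemainder_fract hn hw).comp (by fun_prop)
  obtain ⟨C, hC⟩ := exists_norm_comp_fract_le
    (continuous_bernoulliRemainder n (s / t)).continuousOn
  have hlim := (tendsto_exp_neg_mul_mul_atTop_of_bounded hs fun u ↦ hC (t * u + y)).const_mul
    (-((n.factorial : ℂ) * ((t : ℂ) ^ n / s ^ (n + 1))))
  rw [integral_Ioi_of_hasDerivAt_off_countable_of_tendsto
    (countable_setOf_affine_mem_range_intCast ht y) (by fun_prop)
    (fun u hu ↦ hasDerivAt_exp_neg_mul_mul_bernoulliRemainder n ht hs₀ hu.2)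
    (integrableOn_Ioi_exp_neg_mul_mul_BFun n hs t y 0) hlim]
  simp only [Complex.ofReal_zero, mul_zero, Complex.exp_zero, zero_add, one_mul, zero_sub,
    neg_mul, neg_neg]

/-- The Laplace transform of the Bernoulli function `B̄ₙ(tu+y)` (identity (16)). -/
theorem laplace_transform_BFun (n : ℕ) (hn : 1 ≤ n) (t : ℝ) (ht : 0 < t) (y : ℝ)
    (s : ℂ) (hs : 0 < s.re) :
    ∫ u in Set.Ioi (0 : ℝ), Complex.exp (-s * u) * ((BFun n (t * u + y)) : ℂ) =
      (n.factorial : ℂ) * ((t : ℂ) ^ n / s ^ (n + 1)) *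
        ((∑ a ∈ Finset.range (n + 1),
            ((BPoly a (Int.fract y)) : ℂ) / (a.factorial : ℂ) * (s / t) ^ a)
          - (s / t) * Complex.exp ((Int.fract y : ℝ) * (s / t)) / (Complex.exp (s / t) - 1)) := by
  simpa only [BPoly_eq_bernoulliFun, bernoulliRemainder] using
    laplace_transform_BFun_general (Nat.one_le_iff_ne_zero.mp hn) ht.ne' y hs
end
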